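/- (Jain's formula for the derivative of the m-th compound, derived in the paper.) Let 1 ≤ k ≤ m ≤ n and let A, X^1, …, X^k ∈ M_n(ℂ). For the m-th compound map ∧^m : M_n(ℂ) → M_{C(n,m)}(ℂ), the (α,β) entry (α, β ∈ Q_{m,n}) of the k-th directional derivative D^k ∧^m(A)(X^1,…,X^k) equals k! · Σ_{ρ,τ∈Q_{k,m}} (−1)^{|ρ|+|τ|} det(A[α|β](ρ|τ)) · Δ(X^1[α|β][ρ|τ], …, X^k[α|β][ρ|τ]), where Δ denotes the mixed discriminant of k matrices of order k. -/

import Mathlib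

open scoped Classical

attribute [local instance] Matrix.normedAddCommGroup Matrix.normedSpace

noncomputable section

/-- The immanant `d_χ(A) = ∑_{σ ∈ S_n} χ(σ) ∏_i a_{i σ(i)}`. -/
def imm {n : ℕ} (χ : Equiv.Perm (Fin n) → ℂ) (A : Matrix (Fin n) (Fin n) ℂ) : ℂ :=
  ∑ σ : Equiv.Perm (Fin n), χ σ * ∏ i, A i (σ i)

/-- `A(i|j)`: replace row `i` and column `j` of `A` by zeros, except the `(i,j)` entry,
which is set to `1`. -/
def unitRowCol {n : ℕ} (A : Matrix (Fin n) (Fin n) ℂ) (i j : Fin n) :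
    Matrix (Fin n) (Fin n) ℂ :=
  Matrix.of fun p q => if p = i then (if q = j then 1 else 0) else if q = j then 0 else A p q

/-- The immanantal adjoint: its `(i,j)` entry is `d_χ(A(i|j))`. -/
def immAdj {n : ℕ} (χ : Equiv.Perm (Fin n) → ℂ) (A : Matrix (Fin n) (Fin n) ℂ) :
    Matrix (Fin n) (Fin n) ℂ :=
  Matrix.of fun i j => imm χ (unitRowCol A i j)

/-- `A(j;X)`: replace the `j`-th column of `A` by the `j`-th column of `X`. -/
def replCol {n : ℕ} (A X : Matrix (Fin n) (Fin n) ℂ) (j : Fin n) :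
    Matrix (Fin n) (Fin n) ℂ :=
  Matrix.of fun p q => if q = j then X p q else A p q

/-- `Q_{k,n}`: the strictly increasing maps from `Fin k` to `Fin n`. -/
def Qset (k n : ℕ) : Finset (Fin k → Fin n) := Finset.univ.filter StrictMono

/-- `A(α ; X^1, …, X^k)`: replace, for each `l`, the `α(l)`-th column of `A` by the
`α(l)`-th column of `X^l`. -/
def replCols {n k : ℕ} (A : Matrix (Fin n) (Fin n) ℂ) (α : Fin k → Fin n)
    (X : Fin k → Matrix (Fin n) (Fin n) ℂ) : Matrix (Fin n) (Fin n) ℂ :=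
  Matrix.of fun p q => if h : ∃ l, α l = q then X (Classical.choose h) p q else A p q

/-- The mixed immanant `Δ_χ(Y^1, …, Y^n)`. -/
def mixedImm {n : ℕ} (χ : Equiv.Perm (Fin n) → ℂ)
    (Y : Fin n → Matrix (Fin n) (Fin n) ℂ) : ℂ :=
  ((n.factorial : ℂ))⁻¹ * ∑ σ : Equiv.Perm (Fin n), imm χ (Matrix.of fun p q => Y (σ q) p q)

/-- The family `(A, …, A, X^1, …, X^k)` with `n - k` copies of `A`. -/
def padFam {n k : ℕ} (A : Matrix (Fin n) (Fin n) ℂ) (X : Fin k → Matrix (Fin n) (Fin n) ℂ) :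
    Fin n → Matrix (Fin n) (Fin n) ℂ :=
  fun i => if h : (i : ℕ) < n - k then A else X ⟨(i : ℕ) - (n - k), by have := i.isLt; omega⟩

/-- The increasing enumeration `ᾱ` of the complement of the range of `α`. -/
def complEnum {n k : ℕ} (α : Fin k → Fin n) : Fin (n - k) → Fin n :=
  if h : (Finset.univ.filter fun j => j ∉ Set.range α).card = n - k then
    (Finset.univ.filter fun j => j ∉ Set.range α).orderEmbOfFin h
  else fun i => ⟨0, by have := i.isLt; omega⟩

/-- `X(α|β)`: the submatrix obtained by deleting rows `α(1), …, α(k)` and columns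
`β(1), …, β(k)`. -/
def delSub {n k : ℕ} (X : Matrix (Fin n) (Fin n) ℂ) (α β : Fin k → Fin n) :
    Matrix (Fin (n - k)) (Fin (n - k)) ℂ :=
  X.submatrix (complEnum α) (complEnum β)

/-- `A ⊕_{α|β} B`. -/
def dSum {n k : ℕ} (α β : Fin k → Fin n) (A : Matrix (Fin k) (Fin k) ℂ)
    (B : Matrix (Fin (n - k)) (Fin (n - k)) ℂ) : Matrix (Fin n) (Fin n) ℂ :=
  Matrix.of fun i j =>
    if hi : ∃ p, α p = i then
      (if hj : ∃ q, β q = j then A (Classical.choose hi) (Classical.choose hj) else 0)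
    else if _hj : ∃ q, β q = j then 0
    else if hi' : ∃ p, complEnum α p = i then
      (if hj' : ∃ q, complEnum β q = j then B (Classical.choose hi') (Classical.choose hj')
       else 0)
    else 0

/-- `X{α|β}`: zero out the entries `(i,j)` with `i ∈ Im α, j ∉ Im β` and those with
`i ∉ Im α, j ∈ Im β`. -/
def maskM {n k : ℕ} (X : Matrix (Fin n) (Fin n) ℂ) (α β : Fin k → Fin n) :
    Matrix (Fin n) (Fin n) ℂ :=
  Matrix.of fun i j =>
    if ((∃ p, α p = i) ∧ ¬ (∃ q, β q = j)) ∨ (¬ (∃ p, α p = i) ∧ (∃ q, β q = j)) then 0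
    else X i j

/-- `X^σ_β`: the matrix whose `β(p)`-th column is the `β(p)`-th column of `X^{σ(p)}`,
all other columns being zero. -/
def zRepl {n k : ℕ} (β : Fin k → Fin n) (σ : Equiv.Perm (Fin k))
    (X : Fin k → Matrix (Fin n) (Fin n) ℂ) : Matrix (Fin n) (Fin n) ℂ :=
  Matrix.of fun p q => if h : ∃ l, β l = q then X (σ (Classical.choose h)) p q else 0

/-- `|α| = α(1) + ⋯ + α(k)` (with `1`-based values). -/
def wt {k n : ℕ} (α : Fin k → Fin n) : ℕ := ∑ l, ((α l : ℕ) + 1)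

/-- The mixed discriminant `Δ(B^1, …, B^k)`. -/
def mixedDisc {k : ℕ} (B : Fin k → Matrix (Fin k) (Fin k) ℂ) : ℂ :=
  ((k.factorial : ℂ))⁻¹ * ∑ σ : Equiv.Perm (Fin k), (Matrix.of fun p q => B (σ q) p q).det

/-- `A{id|β}`: zero out the entries of the first `k` rows in the columns outside `Im β`,
and the entries of the remaining rows in the columns of `Im β`. -/
def maskId {n k : ℕ} (A : Matrix (Fin n) (Fin n) ℂ) (β : Fin k → Fin n) :
    Matrix (Fin n) (Fin n) ℂ :=
  Matrix.of fun i j =>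
    if ((i : ℕ) < k ∧ j ∉ Set.range β) ∨ (k ≤ (i : ℕ) ∧ j ∈ Set.range β) then 0 else A i j

/-- The `m`-th compound of an `n × n` matrix, with rows and columns indexed by `Q_{m,n}`. -/
def compound (m n : ℕ) (A : Matrix (Fin n) (Fin n) ℂ) :
    Matrix {α : Fin m → Fin n // StrictMono α} {α : Fin m → Fin n // StrictMono α} ℂ :=
  Matrix.of fun α β => (A.submatrix α.1 β.1).det

end

/-!
The determinant is multilinear in the columns, so the `k`-th derivative of `det A[α|β]` in the
directions `X 0, …, X (k - 1)` is the sum, over the injections of `{0, …, k - 1}` into the columns,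
of the determinants in which the chosen columns of `A[α|β]` are replaced by those of the `X l`. An
injection is an increasing map `τ` precomposed with a permutation `σ`. Expanding each determinant
along the columns `τ` by Laplace's formula leaves the complementary minors of `A[α|β]` unaffected by
`σ`, and the remaining sum over `σ` polarizes the `k × k` minors, giving `k!` times a mixed
discriminant.
-/

noncomputable section

open Finset Function Equiv

/-- The matrix whose `j`-th column is the `j`-th column of `Y j`. Its determinant is the multilinear
polarization in the columns underlying mixed discriminants. -/
def mixCols {p q R : Type*} (Y : q → Matrix p q R) : Matrix p q R :=
  Matrix.of fun i j => Y j i j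

/-- The full polarization of the determinant at `X 0, …, X (k - 1)`, that is `k!` times their mixed
discriminant; without the factor `1 / k!` it makes sense over every commutative ring. -/
def polarizedDet {R : Type*} [CommRing R] {k : ℕ} (X : Fin k → Matrix (Fin k) (Fin k) R) : R :=
  ∑ σ : Perm (Fin k), (mixCols (X ∘ σ)).det

lemma factorial_mul_mixedDisc {k : ℕ} (X : Fin k → Matrix (Fin k) (Fin k) ℂ) :
    (k.factorial : ℂ) * mixedDisc X = polarizedDet X :=
  mul_inv_cancel_left₀ (Nat.cast_ne_zero.2 k.factorial_ne_zero) _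

section StrictlyIncreasingMaps

variable {k m : ℕ}

lemma mem_Qset {τ : Fin k → Fin m} : τ ∈ Qset k m ↔ StrictMono τ := by
  simp only [Qset, mem_filter, mem_univ, true_and]

lemma comp_sort_mem_Qset {f : Fin k → Fin m} (hf : Injective f) : f ∘ Tuple.sort f ∈ Qset k m :=
  mem_Qset.2 <| (Tuple.monotone_sort f).strictMono_of_injective <|
    hf.comp (Tuple.sort f).injective

lemma sum_Qset_image {M : Type*} [AddCommMonoid M] (F : Finset (Fin m) → M) :
    ∑ ρ ∈ Qset k m, F (univ.image ρ) = ∑ s ∈ powersetCard k univ, F s := by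
  refine sum_nbij (fun ρ => univ.image ρ) (fun ρ hρ => ?_) (fun ρ hρ ρ' hρ' h => ?_)
    (fun s hs => ?_) fun _ _ => rfl
  · rw [mem_powersetCard_univ, card_image_of_injective _ (mem_Qset.1 hρ).injective,
      card_univ, Fintype.card_fin]
  · refine ((mem_Qset.1 hρ).range_inj (mem_Qset.1 hρ')).1 ?_
    simpa only [coe_image, coe_univ, Set.image_univ] using congrArg SetLike.coe h
  · have hs : #s = k := mem_powersetCard_univ.1 hs
    exact ⟨s.orderEmbOfFin hs, mem_Qset.2 (s.orderEmbOfFin hs).strictMono,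
      image_orderEmbOfFin_univ s hs⟩

lemma sum_embedding_eq_sum_Qset_perm {M : Type*} [AddCommMonoid M] (F : (Fin k → Fin m) → M) :
    ∑ e : Fin k ↪ Fin m, F e = ∑ τ ∈ Qset k m, ∑ σ : Perm (Fin k), F (τ ∘ σ.symm) := by
  rw [← sum_product']
  symm
  refine sum_bij (fun x hx => ⟨x.1 ∘ x.2.symm,
      (mem_Qset.1 (mem_product.1 hx).1).injective.comp x.2.symm.injective⟩)
    (fun _ _ => mem_univ _) ?_ (fun e _ => ?_) fun _ _ => rfl
  · rintro ⟨τ, σ⟩ hx ⟨τ', σ'⟩ hx' h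
    have hτ : StrictMono τ := mem_Qset.1 (mem_product.1 hx).1
    have hτ' : StrictMono τ' := mem_Qset.1 (mem_product.1 hx').1
    have hcomp : τ ∘ σ.symm = τ' ∘ σ'.symm := congrArg DFunLike.coe h
    obtain rfl : τ = τ' := by
      rw [← hτ.range_inj hτ', ← σ.symm.surjective.range_comp, hcomp,
        σ'.symm.surjective.range_comp]
    have hσ : σ.symm = σ'.symm := Equiv.ext fun l => hτ.injective (congrFun hcomp l)
    rw [symm_bijective.injective hσ]
  · refine ⟨(e ∘ Tuple.sort e, Tuple.sort e),
      mem_product.2 ⟨comp_sort_mem_Qset e.injective, mem_univ _⟩, ?_⟩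
    ext l
    simp

lemma complEnum_eq_orderEmbOfFin {τ : Fin k → Fin m} (hτ : Injective τ) :
    ∃ h : #{j | j ∉ Set.range τ} = m - k,
      complEnum τ = (univ.filter fun j => j ∉ Set.range τ).orderEmbOfFin h := by
  have hcompl : (univ.filter fun j => j ∉ Set.range τ) = (univ.image τ)ᶜ := by
    ext j
    simp
  have hcard : #{j | j ∉ Set.range τ} = m - k := by
    rw [hcompl, card_compl, card_image_of_injective _ hτ, card_univ, Fintype.card_fin,
      Fintype.card_fin]
  exact ⟨hcard, dif_pos hcard⟩

lemma complEnum_strictMono {τ : Fin k → Fin m} (hτ : Injective τ) : StrictMono (complEnum τ) := by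
  obtain ⟨hcard, h⟩ := complEnum_eq_orderEmbOfFin hτ
  exact h ▸ OrderEmbedding.strictMono _

lemma range_complEnum {τ : Fin k → Fin m} (hτ : Injective τ) :
    Set.range (complEnum τ) = (Set.range τ)ᶜ := by
  obtain ⟨hcard, h⟩ := complEnum_eq_orderEmbOfFin hτ
  rw [h, range_orderEmbOfFin, coe_filter_univ]
  rfl

lemma complEnum_notMem_range {τ : Fin k → Fin m} (hτ : Injective τ) (j : Fin (m - k)) :
    complEnum τ j ∉ Set.range τ := by
  rw [← Set.mem_compl_iff, ← range_complEnum hτ]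
  exact Set.mem_range_self j

/-- The splitting of `Fin m` into the range of `τ`, listed by `τ`, and its complement, listed in
increasing order. -/
def splitEquiv {τ : Fin k → Fin m} (hτ : Injective τ) : Fin k ⊕ Fin (m - k) ≃ Fin m :=
  Equiv.ofBijective (Sum.elim τ (complEnum τ))
    ⟨hτ.sumElim (complEnum_strictMono hτ).injective fun i j h =>
        complEnum_notMem_range hτ j ⟨i, h⟩,
      Set.range_eq_univ.1 <| by
        rw [Set.Sum.elim_range, range_complEnum hτ, Set.union_compl_self]⟩

end StrictlyIncreasingMaps

section SignOfShuffles

lemma card_inversions_add_val {m : ℕ} (π : Perm (Fin m)) {i : Fin m} (hi : ∀ j < i, π j < π i) :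
    #{j ∈ Ioi i | ¬ π i < π j} + (i : ℕ) = π i := by
  have hsmaller : univ.filter (fun j => π j < π i) =
      {j ∈ Ioi i | ¬ π i < π j}.disjUnion (Iio i) (disjoint_left.2 fun j hj hj' =>
        lt_asymm (mem_Ioi.1 (mem_filter.1 hj).1) (mem_Iio.1 hj')) := by
    ext j
    have hne : i < j → π j ≠ π i := fun h => π.injective.ne h.ne'
    grind
  have hcard : #{j | π j < π i} = π i := by
    rw [← Fin.card_Iio (π i), ← card_map π.toEmbedding]
    congr 1
    ext j
    simp
  rw [← hcard, hsmaller, card_disjUnion, Fin.card_Iio]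

variable {k l m : ℕ}

lemma sign_of_strictMono_blocks (π : Perm (Fin (k + l)))
    (hleft : StrictMono (π ∘ Fin.castAdd l)) (hright : StrictMono (π ∘ Fin.natAdd k)) :
    Perm.sign π = (-1) ^ (wt (π ∘ Fin.castAdd l) + wt (Fin.castAdd l : Fin k → Fin (k + l))) := by
  have hL (i : Fin k) : (∏ j ∈ Ioi (Fin.castAdd l i),
      if π (Fin.castAdd l i) < π j then (1 : ℤˣ) else -1) =
        (-1) ^ ((π (Fin.castAdd l i) : ℕ) + 1 + (i + 1)) := by
    have hi : ∀ j < Fin.castAdd l i, π j < π (Fin.castAdd l i) := fun j hj =>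
      hleft (a := ⟨j, (Fin.lt_def.1 hj).trans i.isLt⟩) hj
    rw [prod_ite, prod_const_one, one_mul, prod_const, ← card_inversions_add_val π hi,
      Fin.val_castAdd, show ∀ c d : ℕ, c + d + 1 + (d + 1) = c + 2 * (d + 1) by intros; ring,
      pow_add, pow_mul, neg_one_sq, one_pow, mul_one]
  have hR (i : Fin l) : (∏ j ∈ Ioi (Fin.natAdd k i),
      if π (Fin.natAdd k i) < π j then (1 : ℤˣ) else -1) = 1 := by
    refine prod_eq_one fun j hj => if_pos ?_
    induction j using Fin.addCases with
    | left j => grind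
    | right j => exact hright (by simpa using hj)
  simp only [Perm.sign_eq_prod_prod_Ioi, Fin.prod_univ_add, hL, hR, prod_const_one, mul_one,
    prod_pow_eq_pow_sum, sum_add_distrib, wt, comp_apply, Fin.val_castAdd]

lemma sign_trans_symm_of_strictMono (e f : Fin k ⊕ Fin l ≃ Fin m)
    (hel : StrictMono (e ∘ Sum.inl)) (her : StrictMono (e ∘ Sum.inr))
    (hfl : StrictMono (f ∘ Sum.inl)) (hfr : StrictMono (f ∘ Sum.inr)) :
    Perm.sign (f.trans e.symm) = (-1) ^ (wt (e ∘ Sum.inl) + wt (f ∘ Sum.inl)) := by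
  obtain rfl : k + l = m := by simpa using Fintype.card_congr e
  have hsign (g : Fin k ⊕ Fin l ≃ Fin (k + l)) (hgl : StrictMono (g ∘ Sum.inl))
      (hgr : StrictMono (g ∘ Sum.inr)) : Perm.sign (finSumFinEquiv.symm.trans g) =
        (-1) ^ (wt (g ∘ Sum.inl) + wt (Fin.castAdd l : Fin k → Fin (k + l))) := by
    have hl : finSumFinEquiv.symm.trans g ∘ Fin.castAdd l = g ∘ Sum.inl := by ext; simp
    have hr : finSumFinEquiv.symm.trans g ∘ Fin.natAdd k = g ∘ Sum.inr := by ext; simp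
    rw [sign_of_strictMono_blocks _ (hl ▸ hgl) (hr ▸ hgr), hl]
  have hconj : (finSumFinEquiv.symm.trans (f.trans e.symm)).trans finSumFinEquiv =
      (finSumFinEquiv.symm.trans e)⁻¹ * finSumFinEquiv.symm.trans f := rfl
  rw [← Perm.sign_symm_trans_trans _ finSumFinEquiv, hconj, Perm.sign_mul, Perm.sign_inv,
    hsign e hel her, hsign f hfl hfr, pow_add, pow_add, pow_add, mul_mul_mul_comm,
    ← mul_pow _ _ (wt (Fin.castAdd l)), neg_one_mul, neg_neg, one_pow, mul_one]

end SignOfShuffles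

section LaplaceExpansion

variable {R : Type*} [CommRing R]

/-- `N{s|t}`: the matrix `N` with the entries outside the two blocks `s × t` and `sᶜ × tᶜ` replaced
by zero. -/
def blockMask {n : Type*} [DecidableEq n] (N : Matrix n n R) (s t : Finset n) : Matrix n n R :=
  Matrix.of fun i j => if i ∈ s ↔ j ∈ t then N i j else 0

lemma det_eq_sum_det_blockMask {n : Type*} [Fintype n] [DecidableEq n] (N : Matrix n n R)
    (t : Finset n) : N.det = ∑ s ∈ powersetCard #t univ, (blockMask N s t).det := by
  -- The term of a permutation `σ` survives in `(blockMask N s t).det` only for `s = σ '' t`.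
  simp_rw [Matrix.det_apply]
  rw [sum_comm]
  refine sum_congr rfl fun σ _ => ?_
  rw [← smul_sum, sum_eq_single (t.map σ.toEmbedding)]
  · simp [blockMask]
  · intro s _ hs
    obtain ⟨i, hi⟩ : ∃ i, ¬ (σ i ∈ s ↔ i ∈ t) := by
      contrapose! hs
      ext j
      simpa using hs (σ.symm j)
    exact prod_eq_zero (mem_univ i) (if_neg hi)
  · intro h
    simp at h

lemma det_blockMask_of_equiv {n p q : Type*} [Fintype n] [DecidableEq n] [Fintype p]
    [DecidableEq p] [Fintype q] [DecidableEq q] (N : Matrix n n R) (e f : p ⊕ q ≃ n) :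
    (blockMask N (univ.image (e ∘ Sum.inl)) (univ.image (f ∘ Sum.inl))).det =
      Perm.sign (f.trans e.symm) * ((N.submatrix (e ∘ Sum.inl) (f ∘ Sum.inl)).det *
        (N.submatrix (e ∘ Sum.inr) (f ∘ Sum.inr)).det) := by
  have hblocks : blockMask N (univ.image (e ∘ Sum.inl)) (univ.image (f ∘ Sum.inl)) =
      (Matrix.fromBlocks (N.submatrix (e ∘ Sum.inl) (f ∘ Sum.inl)) 0 0
        (N.submatrix (e ∘ Sum.inr) (f ∘ Sum.inr))).reindex e f := by
    rw [← Equiv.symm_apply_eq]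
    ext (i | i) (j | j) <;> simp [blockMask]
  rw [hblocks, Matrix.det_reindex, Matrix.det_fromBlocks_zero₂₁]

lemma det_eq_sum_Qset_minors {k m : ℕ} (N : Matrix (Fin m) (Fin m) R) {τ : Fin k → Fin m}
    (hτ : StrictMono τ) :
    N.det = ∑ ρ ∈ Qset k m, (-1) ^ (wt ρ + wt τ) *
      ((N.submatrix ρ τ).det * (N.submatrix (complEnum ρ) (complEnum τ)).det) := by
  have hcard : #(univ.image τ) = k := by
    rw [card_image_of_injective _ hτ.injective, card_univ, Fintype.card_fin]
  rw [det_eq_sum_det_blockMask N (univ.image τ), hcard,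
    ← sum_Qset_image fun s => (blockMask N s (univ.image τ)).det]
  refine sum_congr rfl fun ρ hρ => ?_
  have hρ : StrictMono ρ := mem_Qset.1 hρ
  let e := splitEquiv hρ.injective
  let f := splitEquiv hτ.injective
  have hsign : Perm.sign (f.trans e.symm) = (-1) ^ (wt ρ + wt τ) :=
    sign_trans_symm_of_strictMono e f hρ (complEnum_strictMono hρ.injective) hτ
      (complEnum_strictMono hτ.injective)
  have hdet := det_blockMask_of_equiv N e f
  rw [hsign] at hdet
  push_cast at hdet
  exact hdet

end LaplaceExpansion

section MixedColumns

variable {R : Type*} {k m : ℕ}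

lemma mixCols_extend_submatrix_range {p r : Type*} {τ : Fin k → p} (hτ : Injective τ)
    (σ : Perm (Fin k)) (A : Matrix p p R) (X : Fin k → Matrix p p R) (ρ : r → p) :
    (mixCols (extend (τ ∘ σ.symm) X fun _ => A)).submatrix ρ τ =
      mixCols ((fun l => (X l).submatrix ρ τ) ∘ σ) := by
  ext i j
  have hj : extend (τ ∘ σ.symm) X (fun _ => A) (τ j) = X (σ j) := by
    simpa using (hτ.comp σ.symm.injective).extend_apply X (fun _ => A) (σ j)
  simp [mixCols, hj]

lemma mixCols_extend_submatrix_of_notMem_range {ι p r c : Type*} {e : ι → p} (A : Matrix p p R)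
    (X : ι → Matrix p p R) (ρ : r → p) {γ : c → p} (hγ : ∀ j, γ j ∉ Set.range e) :
    (mixCols (extend e X fun _ => A)).submatrix ρ γ = A.submatrix ρ γ := by
  ext i j
  simp only [mixCols, Matrix.submatrix_apply, Matrix.of_apply, extend_apply' _ _ _ (hγ j)]

lemma sum_embedding_det_mixCols_extend [CommRing R] (A : Matrix (Fin m) (Fin m) R)
    (X : Fin k → Matrix (Fin m) (Fin m) R) :
    ∑ e : Fin k ↪ Fin m, (mixCols (extend e X fun _ => A)).det =
      ∑ ρ ∈ Qset k m, ∑ τ ∈ Qset k m, (-1) ^ (wt ρ + wt τ) *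
        (A.submatrix (complEnum ρ) (complEnum τ)).det *
          polarizedDet fun l => (X l).submatrix ρ τ := by
  rw [sum_embedding_eq_sum_Qset_perm fun e => (mixCols (extend e X fun _ => A)).det,
    sum_comm (s := Qset k m) (t := Qset k m)]
  refine sum_congr rfl fun τ hτ => ?_
  have hτ : StrictMono τ := mem_Qset.1 hτ
  have hcompl (σ : Perm (Fin k)) (j : Fin (m - k)) : complEnum τ j ∉ Set.range (τ ∘ σ.symm) := by
    rw [σ.symm.surjective.range_comp]
    exact complEnum_notMem_range hτ.injective j
  simp_rw [polarizedDet, mul_sum]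
  rw [sum_comm]
  refine sum_congr rfl fun σ _ => ?_
  rw [det_eq_sum_Qset_minors _ hτ]
  refine sum_congr rfl fun ρ _ => ?_
  rw [mixCols_extend_submatrix_range hτ.injective,
    mixCols_extend_submatrix_of_notMem_range A X _ (hcompl σ)]
  ring

end MixedColumns

section Derivatives

variable {𝕜 : Type*} [NontriviallyNormedField 𝕜] {k : ℕ}

lemma iteratedFDeriv_multilinear_comp_linear {ι F G : Type*} {E : ι → Type*} [Fintype ι]
    [NormedAddCommGroup F] [NormedSpace 𝕜 F] [NormedAddCommGroup G] [NormedSpace 𝕜 G]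
    [∀ i, NormedAddCommGroup (E i)] [∀ i, NormedSpace 𝕜 (E i)]
    (f : ContinuousMultilinearMap 𝕜 E G) (L : F →L[𝕜] ∀ i, E i) (x : F) (v : Fin k → F) :
    iteratedFDeriv 𝕜 k (fun y => f (L y)) x v =
      ∑ e : Fin k ↪ ι, f fun i => L (extend e v (fun _ => x) i) i := by
  change iteratedFDeriv 𝕜 k (f ∘ L) x v = _
  rw [L.iteratedFDeriv_comp_right f.contDiff x le_rfl, f.iteratedFDeriv_eq]
  simp only [ContinuousMultilinearMap.iteratedFDeriv,
    ContinuousMultilinearMap.compContinuousLinearMap_apply, _root_.sum_apply,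
    ContinuousMultilinearMap.iteratedFDerivComponent_apply, Pi.compRightL_apply]
  refine sum_congr rfl fun e _ => congrArg f (funext fun i => ?_)
  by_cases hi : i ∈ Set.range e
  · obtain ⟨l, rfl⟩ := hi
    simp [e.injective.extend_apply]
  · rw [dif_neg hi, extend_apply' _ _ _ hi]

lemma iteratedFDeriv_matrix_entry {E p q : Type*} [NormedAddCommGroup E] [NormedSpace 𝕜 E]
    [Fintype p] [Fintype q] {f : E → Matrix p q 𝕜} {x : E} (hf : ContDiffAt 𝕜 k f x)
    (v : Fin k → E) (i : p) (j : q) :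
    iteratedFDeriv 𝕜 k f x v i j = iteratedFDeriv 𝕜 k (fun y => f y i j) x v := by
  let entry : Matrix p q 𝕜 →L[𝕜] 𝕜 :=
    ⟨Matrix.entryLinearMap 𝕜 𝕜 i j, continuous_id.matrix_elem i j⟩
  exact (congrArg (fun D => D v) (entry.iteratedFDeriv_comp_left hf le_rfl)).symm

variable {n ι κ : Type*} [Fintype n] [DecidableEq n]

/-- The determinant as a continuous multilinear map of the rows. -/
def detRowMultilinear (𝕜 n : Type*) [NontriviallyNormedField 𝕜] [Fintype n] [DecidableEq n] :
    ContinuousMultilinearMap 𝕜 (fun _ : n => n → 𝕜) 𝕜 where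
  toMultilinearMap := (Matrix.detRowAlternating (n := n) (R := 𝕜)).toMultilinearMap
  cont := Continuous.matrix_det continuous_id

/-- The map `A ↦ (A[α|β])ᵀ`, as a continuous linear map into the tuples of columns of `A[α|β]`. -/
def submatrixColumns (𝕜 : Type*) [NontriviallyNormedField 𝕜] (α : n → ι) (β : n → κ) :
    Matrix ι κ 𝕜 →L[𝕜] n → n → 𝕜 where
  toFun A j i := A (α i) (β j)
  map_add' _ _ := rfl
  map_smul' _ _ := rfl
  cont := by fun_prop

lemma det_submatrix_eq_detRowMultilinear (α : n → ι) (β : n → κ) (A : Matrix ι κ 𝕜) :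
    (A.submatrix α β).det = detRowMultilinear 𝕜 n (submatrixColumns 𝕜 α β A) :=
  (Matrix.det_transpose _).symm

variable [Fintype ι] [Fintype κ]

lemma contDiff_det_submatrix (α : n → ι) (β : n → κ) :
    ContDiff 𝕜 k fun A : Matrix ι κ 𝕜 => (A.submatrix α β).det := by
  simp only [det_submatrix_eq_detRowMultilinear]
  exact (detRowMultilinear 𝕜 n).contDiff.comp (submatrixColumns 𝕜 α β).contDiff

lemma iteratedFDeriv_det_submatrix (α : n → ι) (β : n → κ) (A : Matrix ι κ 𝕜)
    (X : Fin k → Matrix ι κ 𝕜) :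
    iteratedFDeriv 𝕜 k (fun B => (B.submatrix α β).det) A X =
      ∑ e : Fin k ↪ n,
        (mixCols (extend e (fun l => (X l).submatrix α β) fun _ => A.submatrix α β)).det := by
  simp only [det_submatrix_eq_detRowMultilinear]
  refine (iteratedFDeriv_multilinear_comp_linear (detRowMultilinear 𝕜 n)
    (submatrixColumns 𝕜 α β) A X).trans (sum_congr rfl fun e _ => ?_)
  rw [← Matrix.det_transpose]
  refine congrArg Matrix.det (Matrix.ext fun j i => ?_)
  exact congrFun₂ (apply_extend (fun B : Matrix ι κ 𝕜 => B.submatrix α β) e (fun _ => A) j)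
    i j

end Derivatives

/-- The compound is the case in which `r` and `s` both enumerate the increasing maps. -/
theorem compound_higher_deriv_entry_general {𝕜 : Type*} [NontriviallyNormedField 𝕜]
    {ι κ p q : Type*} [Fintype ι] [Fintype κ] [Fintype p] [Fintype q] {m k : ℕ}
    (r : p → Fin m → ι) (s : q → Fin m → κ) (A : Matrix ι κ 𝕜) (X : Fin k → Matrix ι κ 𝕜)
    (a : p) (b : q) :
    iteratedFDeriv 𝕜 k (fun B => Matrix.of fun a b => (B.submatrix (r a) (s b)).det) A X a b =
      ∑ ρ ∈ Qset k m, ∑ τ ∈ Qset k m, (-1) ^ (wt ρ + wt τ) *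
        ((A.submatrix (r a) (s b)).submatrix (complEnum ρ) (complEnum τ)).det *
          polarizedDet fun l => ((X l).submatrix (r a) (s b)).submatrix ρ τ := by
  have hsmooth : ContDiff 𝕜 k fun B : Matrix ι κ 𝕜 =>
      Matrix.of fun a b => (B.submatrix (r a) (s b)).det :=
    contDiff_pi.2 fun a => contDiff_pi.2 fun b => contDiff_det_submatrix (r a) (s b)
  rw [iteratedFDeriv_matrix_entry hsmooth.contDiffAt]
  exact (iteratedFDeriv_det_submatrix (r a) (s b) A X).trans (sum_embedding_det_mixCols_extend _ _)

end

/-- Jain's formula for the derivative of the `m`-th compound.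
The `(α,β)` entry of `D^k ∧^m(A)(X^1, …, X^k)` equals
`k! ∑_{ρ,τ ∈ Q_{k,m}} (-1)^{|ρ|+|τ|} det(A[α|β](ρ|τ)) Δ(X^1[α|β][ρ|τ], …, X^k[α|β][ρ|τ])`. -/
theorem compound_higher_deriv_entry (n m k : ℕ) (hk : 1 ≤ k) (hkm : k ≤ m) (hmn : m ≤ n)
    (A : Matrix (Fin n) (Fin n) ℂ) (X : Fin k → Matrix (Fin n) (Fin n) ℂ)
    (α β : Fin m → Fin n) (hα : StrictMono α) (hβ : StrictMono β) :
    (iteratedFDeriv ℂ k (compound m n) A (fun i => X i)) ⟨α, hα⟩ ⟨β, hβ⟩ =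
      (k.factorial : ℂ) * ∑ ρ ∈ Qset k m, ∑ τ ∈ Qset k m,
        (-1 : ℂ) ^ (wt ρ + wt τ) * (delSub (A.submatrix α β) ρ τ).det *
          mixedDisc (fun i => ((X i).submatrix α β).submatrix ρ τ) := by
  simp only [Finset.mul_sum, mul_left_comm (k.factorial : ℂ), factorial_mul_mixedDisc]
  exact compound_higher_deriv_entry_general Subtype.val Subtype.val A X ⟨α, hα⟩ ⟨β, hβ⟩
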